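/- Let R be a commutative semiring, let π ∈ R^{n×n} be an idempotent matrix (π² = π), and let M_π ⊆ R^n be the image of π : R^n → R^n. If M_π is an invertible R-module, then the matrix entries π_{ij} generate the unit ideal of R, and for every pair (i, j) the R[1/π_{ij}]-module R[1/π_{ij}] ⊗_R M_π is free of rank 1. In particular, every invertible module over a commutative semiring is Zariski-locally free of rank 1. -/

import Mathlib

/-!
An invertible module `M` satisfies `Dual R M ⊗ M ≃ R` through the evaluation pairing, so `1` is a
finite sum of values `f m` with `f : Dual R M` and `m : M`; hence these values generate the unit
ideal (`exists_one_eq_sum_dual_apply`).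

If `a = f m` is such a value, then after inverting `a` the functional `f` takes a unit value, so it
becomes a surjection from an invertible module onto the base. A surjection between invertible
modules is bijective (`Module.Invertible.bijective_of_surjective`), so `R[1/a] ⊗ M ≃ R[1/a]`
(`nonempty_linearEquiv_away`). This proves local freeness for every invertible module.

When `M` is the image of a matrix `π`, the entry `π i j` is the value of the `i`-th coordinate
functional at the `j`-th column, so the second paragraph applies to it. For `x = π y` and any
functional `f` one has `f x = ∑ j, y j * f (π e_j)`, and idempotency gives `π x = x`, hence also
`f x = ∑ j, x j * f (π e_j)`, where every `x j = ∑ k, π j k * y k` lies in the ideal of the entries.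
So that ideal contains all values `f x`, and therefore `1`.
-/

/-!
Every invertible module over a commutative semiring is Zariski-locally free of
rank 1.  Precisely: if `π` is an idempotent matrix whose image `M_π` is invertible,
then the entries of `π` generate the unit ideal and `M_π` becomes free of rank 1
over each localization `R[1/π i j]`.
-/

universe u

open TensorProduct

/-- An inverse of the module `M`: a module `N` with `M ⊗ N ≅ R`.  `M` is invertible
(i.e. `M ⊗ –` is an equivalence of categories) iff such an inverse exists. -/
structure ModInverse (R : Type u) [CommSemiring R] (M : Type u) [AddCommMonoid M]
    [Module R M] : Type (u + 1) where
  N : Type u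
  [addN : AddCommMonoid N]
  [modN : Module R N]
  equiv : (M ⊗[R] N) ≃ₗ[R] R

theorem ModInverse.invertible {R M : Type u} [CommSemiring R] [AddCommMonoid M] [Module R M]
    (h : ModInverse R M) : Module.Invertible R M :=
  letI := h.addN
  letI := h.modN
  Module.Invertible.left h.equiv

theorem exists_one_eq_sum_dual_apply (R M : Type*) [CommSemiring R] [AddCommMonoid M]
    [Module R M] [Module.Invertible R M] :
    ∃ S : Finset (Module.Dual R M × M), (1 : R) = ∑ p ∈ S, p.1 p.2 := by
  obtain ⟨S, hS⟩ := ((Module.Invertible.linearEquiv R M).symm 1).exists_finset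
  refine ⟨S, ?_⟩
  simpa [Module.Invertible.linearEquiv] using (LinearEquiv.symm_apply_eq _).mp hS

/-- Inverting a value `f m` of a functional on an invertible module makes the module free of
rank 1, with the base change of `f` as the trivialization. -/
theorem nonempty_linearEquiv_away {R M : Type*} [CommSemiring R] [AddCommMonoid M]
    [Module R M] [Module.Invertible R M] (f : Module.Dual R M) (m : M) :
    Nonempty ((Localization.Away (f m) ⊗[R] M) ≃ₗ[Localization.Away (f m)]
      Localization.Away (f m)) := by
  let A := Localization.Away (f m)
  let g : A ⊗[R] M →ₗ[A] A := Module.Dual.baseChange A f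
  have hg : g (1 ⊗ₜ m) = algebraMap R A (f m) := by
    simp [g, Algebra.algebraMap_eq_smul_one]
  have surj : Function.Surjective g := LinearMap.range_eq_top.mp <|
    Ideal.eq_top_of_isUnit_mem _ ⟨_, hg⟩ (IsLocalization.Away.algebraMap_isUnit (f m))
  exact ⟨.ofBijective g (Module.Invertible.bijective_of_surjective surj)⟩

/-- The ideal generated by the entries of an idempotent matrix is the trace ideal of its image;
this is the inclusion of the trace ideal. -/
theorem dual_apply_mem_span_entries {R : Type*} [CommSemiring R] {n : ℕ}
    {π : Matrix (Fin n) (Fin n) R} (hπ : π * π = π)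
    (f : Module.Dual R (LinearMap.range π.mulVecLin)) (x : LinearMap.range π.mulVecLin) :
    f x ∈ Ideal.span (Set.range fun p : Fin n × Fin n => π p.1 p.2) := by
  obtain ⟨_, y, rfl⟩ := x
  have hx : (⟨π.mulVecLin y, y, rfl⟩ : LinearMap.range π.mulVecLin) =
      ∑ j, π.mulVecLin y j • π.mulVecLin.rangeRestrict (Pi.single j 1) := by
    simp_rw [← map_smul, ← map_sum, ← pi_eq_sum_univ' (π.mulVecLin y)]
    ext1
    simp [hπ]
  rw [hx, map_sum]
  refine Ideal.sum_mem _ fun j _ => ?_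
  rw [map_smul, smul_eq_mul]
  refine Ideal.mul_mem_right _ _ ?_
  rw [Matrix.mulVecLin_apply, Matrix.mulVec, dotProduct]
  exact Ideal.sum_mem _ fun k _ => Ideal.mul_mem_right _ _ (Ideal.subset_span ⟨(j, k), rfl⟩)

/-- **Invertible modules over semirings are Zariski-locally free of rank 1.**
Part 1: if `π` is an idempotent `n × n` matrix over the commutative semiring `R`
whose image `M_π ⊆ R^n` is an invertible module, then the entries of `π` generate
the unit ideal, and over each localization `R[1/π i j]` the module `M_π` becomes
free of rank 1.  Part 2: consequently every invertible `R`-module is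
Zariski-locally free of rank 1. -/
theorem invertible_module_zariski_locally_free_rank_one (R : Type u) [CommSemiring R] :
    (∀ (n : ℕ) (π : Matrix (Fin n) (Fin n) R), π * π = π →
      Nonempty (ModInverse R ↥(LinearMap.range π.mulVecLin)) →
      Ideal.span (Set.range fun p : Fin n × Fin n => π p.1 p.2) = ⊤ ∧
      ∀ i j : Fin n,
        Nonempty (((Localization.Away (π i j)) ⊗[R] ↥(LinearMap.range π.mulVecLin))
          ≃ₗ[Localization.Away (π i j)] (Localization.Away (π i j)))) ∧
    (∀ (M : Type u) [AddCommMonoid M] [Module R M], Nonempty (ModInverse R M) →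
      ∃ (m : ℕ) (a : Fin m → R), Ideal.span (Set.range a) = ⊤ ∧
        ∀ i, Nonempty (((Localization.Away (a i)) ⊗[R] M)
          ≃ₗ[Localization.Away (a i)] (Localization.Away (a i)))) := by
  refine ⟨fun n π hπ ⟨h⟩ => ?_, fun M _ _ ⟨h⟩ => ?_⟩
  · have := h.invertible
    refine ⟨?_, fun i j => ?_⟩
    · obtain ⟨S, hS⟩ := exists_one_eq_sum_dual_apply R (LinearMap.range π.mulVecLin)
      rw [Ideal.eq_top_iff_one, hS]
      exact Ideal.sum_mem _ fun p _ => dual_apply_mem_span_entries hπ p.1 p.2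
    · have hcol : π.mulVec (Pi.single j 1) i = π i j := by simp
      -- `π i j` is the `i`-th coordinate of the `j`-th column `π e_j`
      let f : Module.Dual R (LinearMap.range π.mulVecLin) :=
        LinearMap.proj i ∘ₗ (LinearMap.range π.mulVecLin).subtype
      have hf : f (π.mulVecLin.rangeRestrict (Pi.single j 1)) = π i j := hcol
      rw [← hf]
      exact nonempty_linearEquiv_away f _
  · have := h.invertible
    obtain ⟨S, hS⟩ := exists_one_eq_sum_dual_apply R M
    let p (i : Fin S.card) : Module.Dual R M × M := S.equivFin.symm i
    refine ⟨S.card, fun i => (p i).1 (p i).2, ?_, fun i => nonempty_linearEquiv_away _ _⟩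
    rw [Ideal.eq_top_iff_one, hS]
    refine Ideal.sum_mem _ fun q hq => Ideal.subset_span ⟨S.equivFin ⟨q, hq⟩, ?_⟩
    simp [p]
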